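/- arXiv:2605.30493 — 5 statements merged into one kernel-verified Lean document; each statement's English description precedes it below -/
import Mathlib

section
/- (Proposition 1) Under the relaxed assumptions with parameters δ_m^1, δ_m^2, δ_e^1, δ_e^2 ≥ 0, the mean markup satisfies max{0, max_{j∈{1,2}} (E[θ̂^j/α^j] − δ_e^j·E[1/α^j] − δ_m^j)} ≤ E[μ] ≤ min_{j∈{1,2}} (E[θ̂^j/α^j] + δ_e^j·E[1/α^j] + δ_m^j). -/
open MeasureTheory

/-- Proposition 1: partial identification of the average markup with two
variable inputs, under the relaxed assumptions with parameters
`δ_m^j, δ_e^j ≥ 0`. -/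
theorem stmt_1 {Ω : Type*} [MeasurableSpace Ω] (P : Measure Ω) [IsProbabilityMeasure P]
    (μ : Ω → ℝ) (α θhat : Fin 2 → Ω → ℝ) (δm δe : Fin 2 → ℝ)
    (hμmeas : Measurable μ) (hαmeas : ∀ j, Measurable (α j))
    (hθhatmeas : ∀ j, Measurable (θhat j))
    (hαpos : ∀ j, ∀ᵐ ω ∂P, 0 < α j ω)
    (hμnonneg : ∀ᵐ ω ∂P, 0 ≤ μ ω)
    (hδm : ∀ j, 0 ≤ δm j) (hδe : ∀ j, 0 ≤ δe j)
    (hrelax : ∀ j, ∃ θ : Ω → ℝ, Measurable θ ∧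
      (∀ᵐ ω ∂P, |μ ω - θ ω / α j ω| ≤ δm j) ∧
      (∀ᵐ ω ∂P, |θ ω - θhat j ω| ≤ δe j))
    (hμint : Integrable μ P)
    (hratioint : ∀ j, Integrable (fun ω => θhat j ω / α j ω) P)
    (hinvint : ∀ j, Integrable (fun ω => 1 / α j ω) P) :
    max 0 (max
        ((∫ ω, θhat 0 ω / α 0 ω ∂P) - δe 0 * (∫ ω, 1 / α 0 ω ∂P) - δm 0)
        ((∫ ω, θhat 1 ω / α 1 ω ∂P) - δe 1 * (∫ ω, 1 / α 1 ω ∂P) - δm 1))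
      ≤ ∫ ω, μ ω ∂P ∧
    (∫ ω, μ ω ∂P) ≤ min
        ((∫ ω, θhat 0 ω / α 0 ω ∂P) + δe 0 * (∫ ω, 1 / α 0 ω ∂P) + δm 0)
        ((∫ ω, θhat 1 ω / α 1 ω ∂P) + δe 1 * (∫ ω, 1 / α 1 ω ∂P) + δm 1) := by
  have key : ∀ j, ∀ᵐ ω ∂P,
      θhat j ω / α j ω - δe j * (1 / α j ω) - δm j ≤ μ ω ∧
      μ ω ≤ θhat j ω / α j ω + δe j * (1 / α j ω) + δm j := by
    intro j
    obtain ⟨θ, -, h1, h2⟩ := hrelax j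
    filter_upwards [h1, h2, hαpos j] with ω h1 h2 h3
    have hp : 0 ≤ 1 / α j ω := by positivity
    rw [abs_le] at h1 h2
    have a := mul_le_mul_of_nonneg_right h2.1 hp
    have b := mul_le_mul_of_nonneg_right h2.2 hp
    have e1 : (θ ω - θhat j ω) * (1 / α j ω) = θ ω / α j ω - θhat j ω / α j ω := by ring
    rw [e1] at a b
    constructor <;> linarith [h1.1, h1.2]
  have lo : ∀ j, (∫ ω, θhat j ω / α j ω ∂P) - δe j * (∫ ω, 1 / α j ω ∂P) - δm j
      ≤ ∫ ω, μ ω ∂P := by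
    intro j
    have hi := (hinvint j).const_mul (δe j)
    have h := integral_mono_ae (((hratioint j).sub hi).sub (integrable_const (δm j))) hμint
      ((key j).mono fun ω h => h.1)
    rw [integral_sub' ((hratioint j).sub hi) (integrable_const (δm j)),
      integral_sub' (hratioint j) hi, integral_const_mul] at h
    simpa using h
  have up : ∀ j, (∫ ω, μ ω ∂P) ≤
      (∫ ω, θhat j ω / α j ω ∂P) + δe j * (∫ ω, 1 / α j ω ∂P) + δm j := by
    intro j
    have hi := (hinvint j).const_mul (δe j)
    have h := integral_mono_ae hμint (((hratioint j).add hi).add (integrable_const (δm j)))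
      ((key j).mono fun ω h => h.2)
    rw [integral_add' ((hratioint j).add hi) (integrable_const (δm j)),
      integral_add' (hratioint j) hi, integral_const_mul] at h
    simpa using h
  exact ⟨max_le (integral_nonneg_of_ae hμnonneg) (max_le (lo 0) (lo 1)), le_min (up 0) (up 1)⟩
end

section
/- (Corollary 1) Let δ_e^max := max(δ_e^1, δ_e^2) and δ_m^max := max(δ_m^1, δ_m^2). Under the relaxed assumptions with parameters δ_m^1, δ_m^2, δ_e^1, δ_e^2 ≥ 0, the mean markup satisfies max{0, max_{j∈{1,2}} (E[θ̂^j/α^j] − δ_e^max·E[1/α^j] − δ_m^max)} ≤ E[μ] ≤ min_{j∈{1,2}} (E[θ̂^j/α^j] + δ_e^max·E[1/α^j] + δ_m^max). -/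
open MeasureTheory

/-- Corollary 1: partial identification of the average markup using the uniform
relaxation parameters `δ_e^max = max(δ_e^1, δ_e^2)` and
`δ_m^max = max(δ_m^1, δ_m^2)`. -/
theorem stmt_2 {Ω : Type*} [MeasurableSpace Ω] (P : Measure Ω) [IsProbabilityMeasure P]
    (μ : Ω → ℝ) (α θhat : Fin 2 → Ω → ℝ) (δm δe : Fin 2 → ℝ)
    (hμmeas : Measurable μ) (hαmeas : ∀ j, Measurable (α j))
    (hθhatmeas : ∀ j, Measurable (θhat j))
    (hαpos : ∀ j, ∀ᵐ ω ∂P, 0 < α j ω)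
    (hμnonneg : ∀ᵐ ω ∂P, 0 ≤ μ ω)
    (hδm : ∀ j, 0 ≤ δm j) (hδe : ∀ j, 0 ≤ δe j)
    (hrelax : ∀ j, ∃ θ : Ω → ℝ, Measurable θ ∧
      (∀ᵐ ω ∂P, |μ ω - θ ω / α j ω| ≤ δm j) ∧
      (∀ᵐ ω ∂P, |θ ω - θhat j ω| ≤ δe j))
    (hμint : Integrable μ P)
    (hratioint : ∀ j, Integrable (fun ω => θhat j ω / α j ω) P)
    (hinvint : ∀ j, Integrable (fun ω => 1 / α j ω) P) :
    max 0 (max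
        ((∫ ω, θhat 0 ω / α 0 ω ∂P) - max (δe 0) (δe 1) * (∫ ω, 1 / α 0 ω ∂P)
          - max (δm 0) (δm 1))
        ((∫ ω, θhat 1 ω / α 1 ω ∂P) - max (δe 0) (δe 1) * (∫ ω, 1 / α 1 ω ∂P)
          - max (δm 0) (δm 1)))
      ≤ ∫ ω, μ ω ∂P ∧
    (∫ ω, μ ω ∂P) ≤ min
        ((∫ ω, θhat 0 ω / α 0 ω ∂P) + max (δe 0) (δe 1) * (∫ ω, 1 / α 0 ω ∂P)
          + max (δm 0) (δm 1))
        ((∫ ω, θhat 1 ω / α 1 ω ∂P) + max (δe 0) (δe 1) * (∫ ω, 1 / α 1 ω ∂P)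
          + max (δm 0) (δm 1)) := by
  have key : ∀ j (D M : ℝ), δe j ≤ D → δm j ≤ M →
      (∫ ω, θhat j ω / α j ω ∂P) - D * (∫ ω, 1 / α j ω ∂P) - M ≤ ∫ ω, μ ω ∂P ∧
      (∫ ω, μ ω ∂P) ≤ (∫ ω, θhat j ω / α j ω ∂P) + D * (∫ ω, 1 / α j ω ∂P) + M := by
    intro j D M hD hM
    obtain ⟨θ, -, h1, h2⟩ := hrelax j
    have hc : Integrable (fun _ : Ω => M) P := integrable_const M
    have hDi : Integrable (fun ω => D * (1 / α j ω)) P := (hinvint j).const_mul D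
    have hpt : ∀ᵐ ω ∂P, θhat j ω / α j ω - D * (1 / α j ω) - M ≤ μ ω ∧
        μ ω ≤ θhat j ω / α j ω + D * (1 / α j ω) + M := by
      filter_upwards [h1, h2, hαpos j] with ω a b c
      have hi : 0 < 1 / α j ω := by positivity
      rw [abs_le] at a b
      rw [div_eq_mul_one_div (θ ω)] at a
      rw [div_eq_mul_one_div (θhat j ω)]
      have e1 := mul_le_mul_of_nonneg_right (show θ ω ≤ θhat j ω + D by linarith) hi.le
      have e2 := mul_le_mul_of_nonneg_right (show θhat j ω - D ≤ θ ω by linarith) hi.le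
      constructor <;> linarith
    have l : ∫ ω, (θhat j ω / α j ω - D * (1 / α j ω) - M) ∂P ≤ ∫ ω, μ ω ∂P :=
      integral_mono_ae (((hratioint j).sub hDi).sub hc) hμint (hpt.mono fun _ h => h.1)
    have u : ∫ ω, μ ω ∂P ≤ ∫ ω, (θhat j ω / α j ω + D * (1 / α j ω) + M) ∂P :=
      integral_mono_ae hμint (((hratioint j).add hDi).add hc) (hpt.mono fun _ h => h.2)
    rw [integral_sub (f := fun ω => θhat j ω / α j ω - D * (1 / α j ω))
      ((hratioint j).sub hDi) hc, integral_sub (hratioint j) hDi,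
      integral_const_mul, integral_const, probReal_univ, one_smul] at l
    rw [integral_add (f := fun ω => θhat j ω / α j ω + D * (1 / α j ω))
      ((hratioint j).add hDi) hc, integral_add (hratioint j) hDi,
      integral_const_mul, integral_const, probReal_univ, one_smul] at u
    exact ⟨l, u⟩
  have k0 := key 0 _ _ (le_max_left (δe 0) (δe 1)) (le_max_left (δm 0) (δm 1))
  have k1 := key 1 _ _ (le_max_right (δe 0) (δe 1)) (le_max_right (δm 0) (δm 1))
  exact ⟨max_le (integral_nonneg_of_ae hμnonneg) (max_le k0.1 k1.1), le_min k0.2 k1.2⟩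
end

section
/- (Proposition 1, finitely many variable inputs) Let J be a nonempty finite index set of variable inputs. Under the relaxed assumptions with parameters δ_m^j, δ_e^j ≥ 0 for every j ∈ J, the mean markup satisfies max{0, max_{j∈J} (E[θ̂^j/α^j] − δ_e^j·E[1/α^j] − δ_m^j)} ≤ E[μ] ≤ min_{j∈J} (E[θ̂^j/α^j] + δ_e^j·E[1/α^j] + δ_m^j). -/
open MeasureTheory

/-- Proposition 1 with finitely many variable inputs indexed by a nonempty
finite type `J`. -/
theorem stmt_3 {Ω : Type*} [MeasurableSpace Ω] (P : Measure Ω) [IsProbabilityMeasure P]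
    {J : Type*} [Fintype J] [Nonempty J]
    (μ : Ω → ℝ) (α θhat : J → Ω → ℝ) (δm δe : J → ℝ)
    (hμmeas : Measurable μ) (hαmeas : ∀ j, Measurable (α j))
    (hθhatmeas : ∀ j, Measurable (θhat j))
    (hαpos : ∀ j, ∀ᵐ ω ∂P, 0 < α j ω)
    (hμnonneg : ∀ᵐ ω ∂P, 0 ≤ μ ω)
    (hδm : ∀ j, 0 ≤ δm j) (hδe : ∀ j, 0 ≤ δe j)
    (hrelax : ∀ j, ∃ θ : Ω → ℝ, Measurable θ ∧
      (∀ᵐ ω ∂P, |μ ω - θ ω / α j ω| ≤ δm j) ∧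
      (∀ᵐ ω ∂P, |θ ω - θhat j ω| ≤ δe j))
    (hμint : Integrable μ P)
    (hratioint : ∀ j, Integrable (fun ω => θhat j ω / α j ω) P)
    (hinvint : ∀ j, Integrable (fun ω => 1 / α j ω) P) :
    max 0 (Finset.univ.sup' Finset.univ_nonempty (fun j =>
        (∫ ω, θhat j ω / α j ω ∂P) - δe j * (∫ ω, 1 / α j ω ∂P) - δm j))
      ≤ ∫ ω, μ ω ∂P ∧
    (∫ ω, μ ω ∂P) ≤ Finset.univ.inf' Finset.univ_nonempty (fun j =>
        (∫ ω, θhat j ω / α j ω ∂P) + δe j * (∫ ω, 1 / α j ω ∂P) + δm j) := by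
  have key : ∀ j, ∀ᵐ ω ∂P,
      θhat j ω / α j ω - δe j * (1 / α j ω) - δm j ≤ μ ω ∧
      μ ω ≤ θhat j ω / α j ω + δe j * (1 / α j ω) + δm j := by
    intro j
    obtain ⟨θ, -, h1, h2⟩ := hrelax j
    filter_upwards [h1, h2, hαpos j] with ω h1 h2 h3
    rw [abs_le] at h1 h2
    have hi : 0 < 1 / α j ω := by positivity
    have e1 := mul_le_mul_of_nonneg_right h2.1 hi.le
    have e2 := mul_le_mul_of_nonneg_right h2.2 hi.le
    rw [div_eq_mul_one_div (θ ω)] at h1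
    rw [div_eq_mul_one_div (θhat j ω)]
    constructor <;> nlinarith [h1.1, h1.2]
  have hd : ∀ j, Integrable (fun ω => δe j * (1 / α j ω)) P :=
    fun j => (hinvint j).const_mul _
  refine ⟨max_le (integral_nonneg_of_ae hμnonneg) (Finset.sup'_le _ _ fun j _ => ?_),
    Finset.le_inf' _ _ fun j _ => ?_⟩
  · have hs : Integrable (fun ω => θhat j ω / α j ω - δe j * (1 / α j ω)) P :=
      (hratioint j).sub (hd j)
    have hle := integral_mono_ae (hs.sub (integrable_const (δm j))) hμint
      ((key j).mono fun ω h => h.1)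
    have e : ∫ ω, (θhat j ω / α j ω - δe j * (1 / α j ω)) - δm j ∂P =
        (∫ ω, θhat j ω / α j ω ∂P) - δe j * (∫ ω, 1 / α j ω ∂P) - δm j := by
      rw [integral_sub hs (integrable_const _), integral_sub (hratioint j) (hd j),
        integral_const_mul]
      simp
    exact e.symm.le.trans hle
  · have hs : Integrable (fun ω => θhat j ω / α j ω + δe j * (1 / α j ω)) P :=
      (hratioint j).add (hd j)
    have hle := integral_mono_ae hμint (hs.add (integrable_const (δm j)))
      ((key j).mono fun ω h => h.2)
    have e : ∫ ω, (θhat j ω / α j ω + δe j * (1 / α j ω)) + δm j ∂P =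
        (∫ ω, θhat j ω / α j ω ∂P) + δe j * (∫ ω, 1 / α j ω ∂P) + δm j := by
      rw [integral_add hs (integrable_const _), integral_add (hratioint j) (hd j),
        integral_const_mul]
      simp
    exact hle.trans e.le
end

section
/- (Emptiness characterization underlying Proposition 2) Let m₁, m₂ ≥ 0 and s₁, s₂ > 0 be real numbers and δ_m, δ_e ≥ 0. The identified set I(δ_m, δ_e) is nonempty if and only if 2·δ_m + δ_e·(s₁ + s₂) ≥ |m₁ − m₂|; equivalently, the model is falsified exactly when δ_m < (|m₁ − m₂| − δ_e·(s₁ + s₂))/2. -/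
/-- Emptiness characterization underlying Proposition 2: the two-input
identified set `I(δ_m, δ_e)` is nonempty iff `2·δ_m + δ_e·(s₁+s₂) ≥ |m₁ − m₂|`;
equivalently, the model is falsified exactly when
`δ_m < (|m₁ − m₂| − δ_e·(s₁+s₂))/2`. -/
theorem stmt_5 (m₁ m₂ s₁ s₂ δm δe : ℝ)
    (hm₁ : 0 ≤ m₁) (hm₂ : 0 ≤ m₂) (hs₁ : 0 < s₁) (hs₂ : 0 < s₂)
    (hδm : 0 ≤ δm) (hδe : 0 ≤ δe) :
    ({x : ℝ | max (max 0 (m₁ - δe * s₁ - δm)) (m₂ - δe * s₂ - δm) ≤ x ∧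
        x ≤ min (m₁ + δe * s₁ + δm) (m₂ + δe * s₂ + δm)}.Nonempty ↔
      2 * δm + δe * (s₁ + s₂) ≥ |m₁ - m₂|) ∧
    (¬ ({x : ℝ | max (max 0 (m₁ - δe * s₁ - δm)) (m₂ - δe * s₂ - δm) ≤ x ∧
        x ≤ min (m₁ + δe * s₁ + δm) (m₂ + δe * s₂ + δm)}.Nonempty) ↔
      δm < (|m₁ - m₂| - δe * (s₁ + s₂)) / 2) := by
  have h1 : 0 ≤ δe * s₁ := by positivity
  have h2 : 0 ≤ δe * s₂ := by positivity
  have key : {x : ℝ | max (max 0 (m₁ - δe * s₁ - δm)) (m₂ - δe * s₂ - δm) ≤ x ∧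
        x ≤ min (m₁ + δe * s₁ + δm) (m₂ + δe * s₂ + δm)}.Nonempty ↔
      2 * δm + δe * (s₁ + s₂) ≥ |m₁ - m₂| := by
    rw [ge_iff_le, abs_le]
    constructor
    · rintro ⟨x, hx⟩
      simp only [Set.mem_ofPred_eq, max_le_iff, le_min_iff] at hx
      obtain ⟨⟨⟨a, b⟩, c⟩, d, e⟩ := hx
      constructor <;> linarith
    · rintro ⟨a, b⟩
      refine ⟨min (m₁ + δe * s₁ + δm) (m₂ + δe * s₂ + δm), ?_, le_rfl⟩
      simp only [max_le_iff, le_min_iff]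
      refine ⟨?_, ?_⟩ <;> (refine ⟨?_, ?_⟩ <;> first | linarith | (constructor <;> linarith))
  refine ⟨key, ?_⟩
  rw [key, ge_iff_le, not_le]
  constructor <;> intro h <;> linarith
end

section
/- (Proposition 2: falsification frontier) Let m₁, m₂ ≥ 0 and s₁, s₂ > 0 be real numbers. The set of nonnegative relaxation pairs at which the bounds exactly touch, {(δ_m, δ_e) ∈ ℝ≥0 × ℝ≥0 : max{0, LB₁, LB₂} = min{UB₁, UB₂}}, equals the line segment {(δ_m, δ_e) ∈ ℝ≥0 × ℝ≥0 : δ_m = (|m₁ − m₂| − δ_e·(s₁ + s₂))/2}. -/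
/-- Proposition 2: the falsification frontier, i.e. the set of nonnegative
relaxation pairs `(δ_m, δ_e)` at which the maximal lower bound and minimal
upper bound exactly touch, is the line segment
`δ_m = (|m₁ − m₂| − δ_e·(s₁ + s₂))/2`. -/
theorem stmt_6 (m₁ m₂ s₁ s₂ : ℝ)
    (hm₁ : 0 ≤ m₁) (hm₂ : 0 ≤ m₂) (hs₁ : 0 < s₁) (hs₂ : 0 < s₂) :
    {p : ℝ × ℝ | 0 ≤ p.1 ∧ 0 ≤ p.2 ∧
        max (max 0 (m₁ - p.2 * s₁ - p.1)) (m₂ - p.2 * s₂ - p.1)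
          = min (m₁ + p.2 * s₁ + p.1) (m₂ + p.2 * s₂ + p.1)}
      = {p : ℝ × ℝ | 0 ≤ p.1 ∧ 0 ≤ p.2 ∧
        p.1 = (|m₁ - m₂| - p.2 * (s₁ + s₂)) / 2} := by
  ext ⟨d, e⟩
  simp only [Set.mem_setOf_eq]
  refine and_congr_right fun hd => and_congr_right fun he => ?_
  have key : ∀ a b : ℝ, 0 ≤ a → 0 ≤ b → (a = 0 ↔ b = 0) →
      (max (max 0 (m₁ - a - d)) (m₂ - b - d) = min (m₁ + a + d) (m₂ + b + d)
        ↔ d = (|m₁ - m₂| - (a + b)) / 2) := by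
    intro a b ha hb hab
    have hab1 : a ≤ 0 → b = 0 := fun h => hab.1 (le_antisymm h ha)
    have hab2 : b ≤ 0 → a = 0 := fun h => hab.2 (le_antisymm h hb)
    clear hab
    rcases abs_cases (m₁ - m₂) with ⟨h1, h2⟩ | ⟨h1, h2⟩ <;> rw [h1] <;> clear h1 <;> grind
  rw [mul_add]
  refine key _ _ (by positivity) (by positivity) ?_
  simp [hs₁.ne', hs₂.ne']
end
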